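/- In a nonlinear model (p_k ≠ k/m for some 0 ≤ k ≤ m) with X_0 > 0 and Y_0 > 0, the zero set Z_P is a finite set, the process {a_n} converges almost surely, and its limit lies in Z_P almost surely. -/

import Mathlib

open MeasureTheory ProbabilityTheory Filter Set

noncomputable section

/-- The polynomial `P(z) = (1/2) ∑_{k=0}^m C(m,k) z^k (1-z)^{m-k} (p_k - k/m)`. -/
def polyP (m : ℕ) (p : ℕ → ℝ) (z : ℝ) : ℝ :=
  (1 / 2) * ∑ k ∈ Finset.range (m + 1),
    (m.choose k : ℝ) * z ^ k * (1 - z) ^ (m - k) * (p k - (k : ℝ) / m)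

/-- The zero set `Z_P = {z ∈ [0,1] : P(z) = 0}`. -/
def zeroSetP (m : ℕ) (p : ℕ → ℝ) : Set ℝ :=
  {z ∈ Set.Icc (0 : ℝ) 1 | polyP m p z = 0}

/-- The two-type preferential attachment process with `m` edges per new node and type
adoption parameters `p 0, …, p m`, defined on a probability space `(Ω, μ)` with filtration
`F`.  `A n` is the number of red nodes and `X n` the sum of the degrees of red nodes at time
`n`; the transition probabilities given `F n` are those of the model: a number `k` of red
neighbours is drawn from the `Binomial(m, x_n)` distribution, and then the new node is red
with probability `p k` (adding `1` to the red nodes and `k + m` to the red degrees) and blue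
with probability `1 - p k` (adding `k` to the red degrees). -/
structure PAProcess (Ω : Type) [MeasurableSpace Ω] where
  μ : Measure Ω
  isProb : IsProbabilityMeasure μ
  m : ℕ
  hm : 1 ≤ m
  p : ℕ → ℝ
  hp : ∀ k ≤ m, p k ∈ Set.Icc (0 : ℝ) 1
  A : ℕ → Ω → ℕ
  X : ℕ → Ω → ℕ
  F : Filtration ℕ ‹MeasurableSpace Ω›
  A0 : ℕ
  B0 : ℕ
  X0 : ℕ
  Y0 : ℕ
  hA0 : ∀ ω, A 0 ω = A0
  hX0 : ∀ ω, X 0 ω = X0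
  adaptedA : ∀ n, Measurable[F n] (A n)
  adaptedX : ∀ n, Measurable[F n] (X n)
  hXle : ∀ n ω, X n ω ≤ X0 + Y0 + 2 * m * n
  step_red : ∀ n, ∀ k ≤ m,
    μ[Set.indicator {ω | A (n + 1) ω = A n ω + 1 ∧ X (n + 1) ω = X n ω + k + m}
        (fun _ => (1 : ℝ)) | F n]
      =ᵐ[μ] fun ω => (m.choose k : ℝ) *
        ((X n ω : ℝ) / ((X0 : ℝ) + Y0 + 2 * m * n)) ^ k *
        (1 - (X n ω : ℝ) / ((X0 : ℝ) + Y0 + 2 * m * n)) ^ (m - k) * p k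
  step_blue : ∀ n, ∀ k ≤ m,
    μ[Set.indicator {ω | A (n + 1) ω = A n ω ∧ X (n + 1) ω = X n ω + k}
        (fun _ => (1 : ℝ)) | F n]
      =ᵐ[μ] fun ω => (m.choose k : ℝ) *
        ((X n ω : ℝ) / ((X0 : ℝ) + Y0 + 2 * m * n)) ^ k *
        (1 - (X n ω : ℝ) / ((X0 : ℝ) + Y0 + 2 * m * n)) ^ (m - k) * (1 - p k)

namespace PAProcess

variable {Ω : Type} [MeasurableSpace Ω] (P : PAProcess Ω)

/-- Total degree `S_n = S_0 + 2mn`. -/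
def S (n : ℕ) : ℕ := P.X0 + P.Y0 + 2 * P.m * n

/-- Normalized red degree `x_n = X_n / S_n`. -/
def x (n : ℕ) (ω : Ω) : ℝ := (P.X n ω : ℝ) / (P.S n : ℝ)

/-- Normalized red node count `a_n = A_n / (A_0 + B_0 + n)`. -/
def a (n : ℕ) (ω : Ω) : ℝ := (P.A n ω : ℝ) / ((P.A0 : ℝ) + P.B0 + n)

/-- The polynomial `P` of the process. -/
def poly : ℝ → ℝ := polyP P.m P.p

/-- The zero set `Z_P` of the process. -/
def Zp : Set ℝ := zeroSetP P.m P.p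

end PAProcess

/-!
Given the past, `A_n` increases on average by `x_n + 2 P(x_n)` and `X_n` by `2m (x_n + P(x_n))`.
Hence `x_{n+1} = x_n + γ_n P(x_n) + ε_n` with `γ_n = 2m / S_{n+1}` of order `1 / n` and martingale
noise `ε_n` whose partial sums converge almost surely, being bounded in `L²`. Adding the tail of the
noise series to `x_n` gives a sequence `y_n` with `y_n - x_n → 0` and increments `γ_n P(x_n) → 0`.
Any interval contains a smaller one on which `P` does not change sign, and `y_n` can eventually
cross the latter in one direction only; hence `y_n` and `x_n` converge to a common limit `L`, and
`P(L) = 0` because `∑ γ_n = ∞`. The conditional mean increments of `A_n` then tend to `L`, and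
Kronecker's lemma removes the noise, so that `a_n → L`.
-/

open scoped Topology

/-! ### Averages and recursions of real sequences -/

theorem tendsto_sum_range_sub_mul_div {b w : ℕ → ℝ} {W : ℝ} (hb : Monotone b)
    (hbtop : Tendsto b atTop atTop) (hw : Tendsto w atTop (𝓝 W)) :
    Tendsto (fun n ↦ (∑ k ∈ Finset.range n, (b (k + 1) - b k) * w k) / b n) atTop (𝓝 W) := by
  have hbsub : Tendsto (fun n ↦ b n - b 0) atTop atTop :=
    tendsto_atTop_add_const_right _ _ hbtop
  have herr : (fun n ↦ ∑ k ∈ Finset.range n, (b (k + 1) - b k) * (w k - W))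
      =o[atTop] fun n ↦ b n - b 0 := by
    have hterm : (fun k ↦ (b (k + 1) - b k) * (w k - W))
        =o[atTop] fun k ↦ b (k + 1) - b k := by
      simpa only [mul_one] using (Asymptotics.isBigO_refl _ _).mul_isLittleO
        ((Asymptotics.isLittleO_one_iff ℝ).2 (tendsto_sub_nhds_zero_iff.2 hw))
    have hsum := hterm.sum_range (fun k ↦ sub_nonneg.2 (hb k.le_succ))
    simp only [Finset.sum_range_sub] at hsum
    exact hsum hbsub
  have hratio : Tendsto (fun n ↦ (b n - b 0) / b n) atTop (𝓝 1) := by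
    have h := (hbtop.const_div_atTop (b 0)).const_sub 1
    rw [sub_zero] at h
    refine h.congr' ?_
    filter_upwards [hbtop.eventually_gt_atTop 0] with n hn
    rw [sub_div, div_self hn.ne']
  have hlim := (herr.tendsto_div_nhds_zero.add_const W).mul hratio
  rw [zero_add, mul_one] at hlim
  refine hlim.congr' ?_
  filter_upwards [hbtop.eventually_gt_atTop 0, hbsub.eventually_gt_atTop 0] with n hn hn'
  have hsplit : ∑ k ∈ Finset.range n, (b (k + 1) - b k) * w k
      = ∑ k ∈ Finset.range n, (b (k + 1) - b k) * (w k - W) + (b n - b 0) * W := by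
    rw [← Finset.sum_range_sub b n, Finset.sum_mul, ← Finset.sum_add_distrib]
    exact Finset.sum_congr rfl fun k _ ↦ by ring
  rw [hsplit]
  field_simp

theorem tendsto_sum_range_div_zero_of_tendsto_sum_range_div {b v : ℕ → ℝ} {W : ℝ} (hb : Monotone b)
    (hb0 : ∀ n, b (n + 1) ≠ 0) (hbtop : Tendsto b atTop atTop)
    (hv : Tendsto (fun n ↦ ∑ k ∈ Finset.range n, v k / b (k + 1)) atTop (𝓝 W)) :
    Tendsto (fun n ↦ (∑ k ∈ Finset.range n, v k) / b n) atTop (𝓝 0) := by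
  set w : ℕ → ℝ := fun n ↦ ∑ k ∈ Finset.range n, v k / b (k + 1) with hw
  have sum_by_parts : ∀ n, ∑ k ∈ Finset.range n, v k
      = b n * w n - ∑ k ∈ Finset.range n, (b (k + 1) - b k) * w k := by
    intro n
    induction n with
    | zero => simp [hw]
    | succ n ih =>
      have hstep : w (n + 1) = w n + v n / b (n + 1) := Finset.sum_range_succ _ _
      rw [Finset.sum_range_succ, Finset.sum_range_succ, ih, hstep]
      field_simp [hb0 n]
      ring
  have hlim := hv.sub (tendsto_sum_range_sub_mul_div hb hbtop hv)
  rw [sub_self] at hlim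
  refine hlim.congr' ?_
  filter_upwards [hbtop.eventually_gt_atTop 0] with n hn
  rw [sum_by_parts, sub_div, mul_div_cancel_left₀ _ hn.ne']

theorem tendsto_div_add_natCast_of_tendsto_sum_range {u q : ℕ → ℝ} {c L W : ℝ} (hc : 0 ≤ c)
    (hq : Tendsto q atTop (𝓝 L))
    (hW : Tendsto (fun n ↦ ∑ k ∈ Finset.range n, (u (k + 1) - u k - q k) / (c + (k + 1 : ℕ)))
      atTop (𝓝 W)) :
    Tendsto (fun n : ℕ ↦ u n / (c + n)) atTop (𝓝 L) := by
  have hmono : Monotone fun n : ℕ ↦ c + n := fun i j hij ↦ by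
    simpa only [add_le_add_iff_left, Nat.cast_le] using hij
  have htop : Tendsto (fun n : ℕ ↦ c + n) atTop atTop :=
    tendsto_atTop_add_const_left _ _ tendsto_natCast_atTop_atTop
  have hcentred := tendsto_sum_range_div_zero_of_tendsto_sum_range_div hmono
    (fun n ↦ by positivity) htop hW
  have hmean := tendsto_sum_range_sub_mul_div hmono htop hq
  have hlim := ((htop.const_div_atTop (u 0)).add hcentred).add hmean
  rw [zero_add, zero_add] at hlim
  refine hlim.congr fun n ↦ ?_
  have hunit : ∀ k : ℕ, c + ((k + 1 : ℕ) : ℝ) - (c + k) = 1 := fun k ↦ by push_cast; ring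
  rw [Finset.sum_sub_distrib, Finset.sum_range_sub u]
  simp only [hunit, one_mul]
  ring

theorem summable_sq_one_div_add_mul_natCast {c d : ℝ} (hd : d ≠ 0) :
    Summable fun n : ℕ ↦ (1 / (c + d * n)) ^ 2 := by
  refine (((Real.summable_one_div_nat_add_rpow (c / d) 2).2 one_lt_two).mul_left
    ((1 / d) ^ 2)).congr fun n ↦ ?_
  rw [Real.rpow_two, sq_abs, ← one_div_pow, ← mul_pow, one_div_mul_one_div, mul_add,
    mul_div_cancel₀ _ hd, add_comm]

theorem not_summable_one_div_add_mul_natCast {c d : ℝ} (hd : d ≠ 0) :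
    ¬ Summable fun n : ℕ ↦ 1 / (c + d * n) := fun h ↦ by
  refine lt_irrefl (1 : ℝ) ((Real.summable_one_div_nat_add_rpow (c / d) 1).1
    ((h.mul_left d).abs.congr fun n ↦ ?_))
  have hfactor : c + d * n = d * (n + c / d) := by
    rw [mul_add, mul_div_cancel₀ _ hd, add_comm]
  rw [Real.rpow_one, hfactor, mul_one_div, mul_comm d, div_mul_cancel_right₀ hd, abs_inv, one_div]

theorem summable_of_eventually_le_sub {f y : ℕ → ℝ} (hf : ∀ n, 0 ≤ f n)
    (hy : BddAbove (range y)) (hfy : ∀ᶠ n in atTop, f n ≤ y (n + 1) - y n) : Summable f := by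
  obtain ⟨N, hN⟩ := eventually_atTop.1 hfy
  obtain ⟨C, hC⟩ := hy
  rw [← summable_nat_add_iff N]
  refine summable_of_sum_range_le (c := C - y N) (fun n ↦ hf _) fun n ↦ ?_
  calc ∑ k ∈ Finset.range n, f (k + N)
      ≤ ∑ k ∈ Finset.range n, (y (k + 1 + N) - y (k + N)) :=
        Finset.sum_le_sum fun k _ ↦ by simpa only [add_right_comm] using hN (k + N) (by omega)
    _ = y (n + N) - y N := by
        simpa only [zero_add] using Finset.sum_range_sub (fun k ↦ y (k + N)) n
    _ ≤ C - y N := sub_le_sub_right (hC (mem_range_self _)) _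

theorem nonpos_of_tendsto_of_not_summable {y γ g : ℕ → ℝ} {ℓ : ℝ} (hγ : ∀ n, 0 ≤ γ n)
    (hγsum : ¬ Summable γ) (hinc : ∀ n, y (n + 1) - y n = γ n * g n)
    (hy : BddAbove (range y)) (hg : Tendsto g atTop (𝓝 ℓ)) : ℓ ≤ 0 := by
  by_contra! hℓ
  refine hγsum ((summable_mul_right_iff (half_pos hℓ).ne').1
    (summable_of_eventually_le_sub (fun n ↦ mul_nonneg (hγ n) (half_pos hℓ).le) hy ?_))
  filter_upwards [hg.eventually (lt_mem_nhds (half_lt_self hℓ))] with n hn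
  rw [hinc]
  exact mul_le_mul_of_nonneg_left hn.le (hγ n)

theorem eq_zero_of_tendsto_of_not_summable {y γ g : ℕ → ℝ} {L ℓ : ℝ} (hγ : ∀ n, 0 ≤ γ n)
    (hγsum : ¬ Summable γ) (hinc : ∀ n, y (n + 1) - y n = γ n * g n)
    (hy : Tendsto y atTop (𝓝 L)) (hg : Tendsto g atTop (𝓝 ℓ)) : ℓ = 0 := by
  refine le_antisymm
    (nonpos_of_tendsto_of_not_summable hγ hγsum hinc hy.bddAbove_range hg)
    (neg_nonpos.1 (nonpos_of_tendsto_of_not_summable (y := -y) hγ hγsum (fun n ↦ ?_)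
      hy.neg.bddAbove_range hg.neg))
  simp only [Pi.neg_apply, mul_neg, ← hinc]
  ring

theorem not_crossing_of_eventually_le_succ {y : ℕ → ℝ} {a b : ℝ} (hab : a < b)
    (hstep : Tendsto (fun n ↦ y (n + 1) - y n) atTop (𝓝 0))
    (hmono : ∀ᶠ n in atTop, y n ∈ Icc a b → y n ≤ y (n + 1)) :
    ¬((∃ᶠ n in atTop, y n < a) ∧ ∃ᶠ n in atTop, b < y n) := by
  rintro ⟨hlow, hhigh⟩
  have hsmall := hstep.eventually (lt_mem_nhds (sub_neg.2 hab))
  obtain ⟨N, hN⟩ := eventually_atTop.1 (hsmall.and hmono)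
  obtain ⟨n₀, hn₀, hb⟩ := frequently_atTop.1 hhigh N
  have stays_above : ∀ n ≥ n₀, a ≤ y n := by
    intro n hn
    induction n, hn using Nat.le_induction with
    | base => exact (hab.trans hb).le
    | succ n hn ih =>
      obtain ⟨hdrop, hup⟩ := hN n (hn₀.trans hn)
      rcases le_or_gt (y n) b with h | h
      · exact ih.trans (hup ⟨ih, h⟩)
      · linarith
  obtain ⟨n₁, hn₁, ha⟩ := frequently_atTop.1 hlow n₀
  exact (stays_above n₁ hn₁).not_gt ha

theorem not_crossing_of_eventually_succ_le {y : ℕ → ℝ} {a b : ℝ} (hab : a < b)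
    (hstep : Tendsto (fun n ↦ y (n + 1) - y n) atTop (𝓝 0))
    (hanti : ∀ᶠ n in atTop, y n ∈ Icc a b → y (n + 1) ≤ y n) :
    ¬((∃ᶠ n in atTop, y n < a) ∧ ∃ᶠ n in atTop, b < y n) := by
  rintro ⟨hlow, hhigh⟩
  refine not_crossing_of_eventually_le_succ (y := -y) (neg_lt_neg hab) ?_ ?_
    ⟨hhigh.mono fun n ↦ neg_lt_neg, hlow.mono fun n ↦ neg_lt_neg⟩
  · simpa only [neg_zero, neg_sub', Pi.neg_apply] using hstep.neg
  · filter_upwards [hanti] with n hn hmem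
    exact neg_le_neg (hn ⟨neg_le_neg_iff.1 hmem.2, neg_le_neg_iff.1 hmem.1⟩)

theorem exists_Ioo_subset_nonneg_or_nonpos {G : ℝ → ℝ} (hG : Continuous G) {a b : ℝ}
    (hab : a < b) : ∃ c d, c < d ∧ Ioo c d ⊆ Ioo a b ∧
      ((∀ z ∈ Ioo c d, 0 ≤ G z) ∨ ∀ z ∈ Ioo c d, G z ≤ 0) := by
  by_cases hpos : (Ioo a b ∩ {z | 0 < G z}).Nonempty
  · obtain ⟨c, d, hcd, hsub⟩ :=
      (isOpen_Ioo.inter (isOpen_lt continuous_const hG)).exists_Ioo_subset hpos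
    exact ⟨c, d, hcd, fun z hz ↦ (hsub hz).1, Or.inl fun z hz ↦ (hsub hz).2.le⟩
  · exact ⟨a, b, hab, subset_rfl, Or.inr fun z hz ↦ not_lt.1 fun h ↦ hpos ⟨z, hz, h⟩⟩

/-! ### Deterministic stochastic approximation -/

theorem exists_tendsto_of_increment_eq_mul {x y γ : ℕ → ℝ} {G : ℝ → ℝ} (hG : Continuous G)
    (hγ : ∀ n, 0 ≤ γ n) (hinc : ∀ n, y (n + 1) - y n = γ n * G (x n))
    (hyx : Tendsto (y - x) atTop (𝓝 0))
    (hstep : Tendsto (fun n ↦ y (n + 1) - y n) atTop (𝓝 0))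
    (hle : IsBoundedUnder (· ≤ ·) atTop y) (hge : IsBoundedUnder (· ≥ ·) atTop y) :
    ∃ L, Tendsto y atTop (𝓝 L) := by
  refine tendsto_of_no_upcrossings dense_univ ?_ hle hge
  rintro a - b - hab ⟨hlow, hhigh⟩
  obtain ⟨c, d, hcd, hsub, hsign⟩ := exists_Ioo_subset_nonneg_or_nonpos hG hab
  obtain ⟨hac, hdb⟩ := (Ioo_subset_Ioo_iff hcd).1 hsub
  obtain ⟨c', hcc', hc'd⟩ := exists_between hcd
  obtain ⟨d', hc'd', hd'd⟩ := exists_between hc'd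
  have hnear : ∀ᶠ n in atTop, y n ∈ Icc c' d' → x n ∈ Ioo c d := by
    filter_upwards [hyx.eventually (gt_mem_nhds (sub_pos.2 hcc')),
      hyx.eventually (lt_mem_nhds (sub_neg.2 hd'd))] with n h₁ h₂ hy
    simp only [Pi.sub_apply] at h₁ h₂
    exact ⟨by linarith [hy.1], by linarith [hy.2]⟩
  have hcross : (∃ᶠ n in atTop, y n < c') ∧ ∃ᶠ n in atTop, d' < y n :=
    ⟨hlow.mono fun n hn ↦ hn.trans (hac.trans_lt hcc'),
      hhigh.mono fun n hn ↦ (hd'd.trans_le hdb).trans hn⟩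
  rcases hsign with hpos | hneg
  · refine not_crossing_of_eventually_le_succ hc'd' hstep (hnear.mono fun n hn hy ↦ ?_) hcross
    exact sub_nonneg.1 (hinc n ▸ mul_nonneg (hγ n) (hpos _ (hn hy)))
  · refine not_crossing_of_eventually_succ_le hc'd' hstep (hnear.mono fun n hn hy ↦ ?_) hcross
    exact sub_nonpos.1 (hinc n ▸ mul_nonpos_of_nonneg_of_nonpos (hγ n) (hneg _ (hn hy)))

theorem exists_root_tendsto_of_stochasticApproximation {x γ ε : ℕ → ℝ} {G : ℝ → ℝ} {K : Set ℝ}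
    {W : ℝ} (hG : Continuous G) (hK : IsCompact K) (hx : ∀ n, x n ∈ K) (hγ : ∀ n, 0 ≤ γ n)
    (hγlim : Tendsto γ atTop (𝓝 0)) (hγsum : ¬ Summable γ)
    (hε : Tendsto (fun n ↦ ∑ k ∈ Finset.range n, ε k) atTop (𝓝 W))
    (hinc : ∀ n, x (n + 1) = x n + γ n * G (x n) + ε n) :
    ∃ L ∈ K, G L = 0 ∧ Tendsto x atTop (𝓝 L) := by
  set y : ℕ → ℝ := fun n ↦ x n + (W - ∑ k ∈ Finset.range n, ε k) with hy
  have hyinc : ∀ n, y (n + 1) - y n = γ n * G (x n) := fun n ↦ by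
    simp only [hy, Finset.sum_range_succ, hinc]
    ring
  have htail : Tendsto (fun n ↦ W - ∑ k ∈ Finset.range n, ε k) atTop (𝓝 0) := by
    simpa only [sub_self] using hε.const_sub W
  have hyx : Tendsto (y - x) atTop (𝓝 0) := htail.congr fun n ↦ (add_sub_cancel_left _ _).symm
  have hstep : Tendsto (fun n ↦ y (n + 1) - y n) atTop (𝓝 0) := by
    obtain ⟨C, hC⟩ := hK.exists_bound_of_continuousOn hG.continuousOn
    simp only [hyinc]
    exact hγlim.zero_mul_isBoundedUnder_le
      (isBoundedUnder_of ⟨C, fun n ↦ hC _ (hx n)⟩)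
  have hxK : range x ⊆ K := range_subset_iff.2 hx
  obtain ⟨L, hL⟩ := exists_tendsto_of_increment_eq_mul hG hγ hyinc hyx hstep
    (isBoundedUnder_le_add (hK.bddAbove.mono hxK).isBoundedUnder_of_range htail.isBoundedUnder_le)
    (isBoundedUnder_ge_add (hK.bddBelow.mono hxK).isBoundedUnder_of_range htail.isBoundedUnder_ge)
  have hxL : Tendsto x atTop (𝓝 L) := by
    simpa only [Pi.sub_apply, sub_sub_cancel, sub_zero] using hL.sub hyx
  exact ⟨L, hK.isClosed.mem_of_tendsto hxL (Eventually.of_forall hx),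
    eq_zero_of_tendsto_of_not_summable hγ hγsum hyinc hL ((hG.tendsto L).comp hxL), hxL⟩

/-! ### Square-integrable martingales -/

section Martingale

variable {Ω : Type*} {m m0 : MeasurableSpace Ω} {μ : Measure Ω} {ℱ : Filtration ℕ m0}

theorem integral_mul_eq_zero_of_condExp_ae_eq_zero (hm : m ≤ m0) [SigmaFinite (μ.trim hm)]
    {f g : Ω → ℝ} (hf : StronglyMeasurable[m] f) (hfg : Integrable (f * g) μ) (hg : Integrable g μ)
    (hg0 : μ[g | m] =ᵐ[μ] 0) : ∫ ω, (f * g) ω ∂μ = 0 := by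
  rw [← integral_condExp hm]
  refine integral_eq_zero_of_ae ?_
  filter_upwards [condExp_mul_of_stronglyMeasurable_left hf hfg hg, hg0] with ω h h0
  rw [h, Pi.mul_apply, h0, Pi.zero_apply, mul_zero]

theorem integral_sq_martingale_succ [SigmaFiniteFiltration μ ℱ] {M : ℕ → Ω → ℝ}
    (hM : Martingale M ℱ μ) (hM2 : ∀ n, MemLp (M n) 2 μ) (n : ℕ) :
    ∫ ω, M (n + 1) ω ^ 2 ∂μ
      = ∫ ω, M n ω ^ 2 ∂μ + ∫ ω, (M (n + 1) ω - M n ω) ^ 2 ∂μ := by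
  have hD2 : MemLp (M (n + 1) - M n) 2 μ := (hM2 (n + 1)).sub (hM2 n)
  have hcond : μ[M (n + 1) - M n | ℱ n] =ᵐ[μ] 0 := by
    filter_upwards [condExp_sub (hM.integrable (n + 1)) (hM.integrable n) (ℱ n),
      hM.condExp_ae_eq n.le_succ, hM.condExp_ae_eq le_rfl] with ω h h₁ h₀
    rw [h, Pi.sub_apply, h₁, h₀, sub_self, Pi.zero_apply]
  have horth := integral_mul_eq_zero_of_condExp_ae_eq_zero (ℱ.le n) (hM.stronglyMeasurable n)
    ((hM2 n).integrable_mul hD2) ((hM.integrable _).sub (hM.integrable _)) hcond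
  calc ∫ ω, M (n + 1) ω ^ 2 ∂μ
      = ∫ ω, (M n ω ^ 2 + (M (n + 1) ω - M n ω) ^ 2)
          + 2 * (M n * (M (n + 1) - M n)) ω ∂μ := by
        refine integral_congr_ae (Eventually.of_forall fun ω ↦ ?_)
        simp only [Pi.mul_apply, Pi.sub_apply]
        ring
    _ = _ := by
        have hDsq : Integrable (fun ω ↦ (M (n + 1) ω - M n ω) ^ 2) μ := hD2.integrable_sq
        have hsq : Integrable (fun ω ↦ M n ω ^ 2 + (M (n + 1) ω - M n ω) ^ 2) μ :=
          (hM2 n).integrable_sq.add hDsq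
        rw [integral_add hsq (((hM2 n).integrable_mul hD2).const_mul 2), integral_const_mul,
          horth, mul_zero, add_zero, integral_add (hM2 n).integrable_sq hDsq]

theorem integral_sq_martingale_eq_add_sum [SigmaFiniteFiltration μ ℱ] {M : ℕ → Ω → ℝ}
    (hM : Martingale M ℱ μ) (hM2 : ∀ n, MemLp (M n) 2 μ) (n : ℕ) :
    ∫ ω, M n ω ^ 2 ∂μ = ∫ ω, M 0 ω ^ 2 ∂μ
      + ∑ k ∈ Finset.range n, ∫ ω, (M (k + 1) ω - M k ω) ^ 2 ∂μ := by
  induction n with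
  | zero => rw [Finset.sum_range_zero, add_zero]
  | succ n ih => rw [integral_sq_martingale_succ hM hM2, ih, Finset.sum_range_succ, add_assoc]

variable [IsFiniteMeasure μ]

theorem eLpNorm_one_le_of_integral_sq_le {f : Ω → ℝ} (hf : MemLp f 2 μ) {C : ℝ}
    (hC : ∫ ω, f ω ^ 2 ∂μ ≤ C) : eLpNorm f 1 μ ≤ ENNReal.ofReal (μ.real univ + C) := by
  have hf1 : Integrable f μ := hf.integrable one_le_two
  rw [eLpNorm_one_eq_lintegral_enorm, ← ofReal_integral_norm_eq_lintegral_enorm hf1]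
  refine ENNReal.ofReal_le_ofReal ?_
  calc ∫ ω, ‖f ω‖ ∂μ ≤ ∫ ω, 1 + f ω ^ 2 ∂μ :=
        integral_mono hf1.norm ((integrable_const 1).add hf.integrable_sq) fun ω ↦ by
          rw [Real.norm_eq_abs, ← sq_abs]
          nlinarith [sq_nonneg (|f ω| - 1)]
    _ = μ.real univ + ∫ ω, f ω ^ 2 ∂μ := by
        rw [integral_add (integrable_const 1) hf.integrable_sq, integral_const, smul_eq_mul,
          mul_one]
    _ ≤ μ.real univ + C := by gcongr

theorem ae_exists_tendsto_of_summable_integral_sq_sub {M : ℕ → Ω → ℝ} (hM : Martingale M ℱ μ)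
    (hM2 : ∀ n, MemLp (M n) 2 μ)
    (hsum : Summable fun n ↦ ∫ ω, (M (n + 1) ω - M n ω) ^ 2 ∂μ) :
    ∀ᵐ ω ∂μ, ∃ W, Tendsto (fun n ↦ M n ω) atTop (𝓝 W) := by
  refine hM.submartingale.exists_ae_tendsto_of_bdd fun n ↦ eLpNorm_one_le_of_integral_sq_le
    (C := ∫ ω, M 0 ω ^ 2 ∂μ + ∑' k, ∫ ω, (M (k + 1) ω - M k ω) ^ 2 ∂μ) (hM2 n) ?_
  rw [integral_sq_martingale_eq_add_sum hM hM2]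
  gcongr
  exact hsum.sum_le_tsum _ fun k _ ↦ integral_nonneg fun ω ↦ sq_nonneg _

theorem martingale_sum_mul_sub_condExp {Z : ℕ → Ω → ℝ} (hZ : StronglyAdapted ℱ Z)
    (hint : ∀ n, Integrable (Z (n + 1) - Z n) μ) (γ : ℕ → ℝ) :
    Martingale (fun n ω ↦ ∑ k ∈ Finset.range n,
      γ k * (Z (k + 1) ω - Z k ω - (μ[Z (k + 1) - Z k | ℱ k]) ω)) ℱ μ := by
  have hsm : ∀ k, StronglyMeasurable[ℱ (k + 1)]
      (fun ω ↦ γ k * (Z (k + 1) ω - Z k ω - (μ[Z (k + 1) - Z k | ℱ k]) ω)) := fun k ↦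
    (((hZ (k + 1)).sub ((hZ k).mono (ℱ.mono k.le_succ))).sub
      (stronglyMeasurable_condExp.mono (ℱ.mono k.le_succ))).const_mul (γ k)
  have hcentred : ∀ k, Integrable (Z (k + 1) - Z k - μ[Z (k + 1) - Z k | ℱ k]) μ := fun k ↦
    (hint k).sub integrable_condExp
  refine martingale_of_condExp_sub_eq_zero_nat (fun n ↦ ?_) (fun n ↦ ?_) fun n ↦ ?_
  · exact Finset.stronglyMeasurable_fun_sum _ fun k hk ↦
      (hsm k).mono (ℱ.mono (Finset.mem_range.1 hk))
  · exact integrable_finsetSum _ fun k _ ↦ (hcentred k).const_mul (γ k)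
  · have hdiff : ((fun ω ↦ ∑ k ∈ Finset.range (n + 1),
          γ k * (Z (k + 1) ω - Z k ω - (μ[Z (k + 1) - Z k | ℱ k]) ω))
        - fun ω ↦ ∑ k ∈ Finset.range n,
          γ k * (Z (k + 1) ω - Z k ω - (μ[Z (k + 1) - Z k | ℱ k]) ω))
        = γ n • (Z (n + 1) - Z n - μ[Z (n + 1) - Z n | ℱ n]) := by
      ext ω
      simp only [Pi.sub_apply, Finset.sum_range_succ, add_sub_cancel_left, Pi.smul_apply,
        smul_eq_mul]
    rw [hdiff]
    filter_upwards [condExp_smul (γ n) (Z (n + 1) - Z n - μ[Z (n + 1) - Z n | ℱ n]) (ℱ n),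
      condExp_sub (hint n) integrable_condExp (ℱ n)] with ω h h'
    rw [h, Pi.smul_apply, h', Pi.sub_apply,
      condExp_of_stronglyMeasurable (ℱ.le n) stronglyMeasurable_condExp integrable_condExp,
      sub_self, smul_zero, Pi.zero_apply]

theorem ae_exists_tendsto_sum_mul_sub_condExp {Z : ℕ → Ω → ℝ} {C : ℝ} {γ : ℕ → ℝ}
    (hZ : StronglyAdapted ℱ Z) (hbdd : ∀ n, ∀ᵐ ω ∂μ, |Z (n + 1) ω - Z n ω| ≤ C)
    (hγ : Summable fun n ↦ γ n ^ 2) :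
    ∀ᵐ ω ∂μ, ∃ W, Tendsto (fun n ↦ ∑ k ∈ Finset.range n,
      γ k * (Z (k + 1) ω - Z k ω - (μ[Z (k + 1) - Z k | ℱ k]) ω)) atTop (𝓝 W) := by
  have hmeas : ∀ n, StronglyMeasurable (Z n) := fun n ↦ (hZ n).mono (ℱ.le n)
  have hinc : ∀ n, MemLp (Z (n + 1) - Z n) ⊤ μ := fun n ↦
    MemLp.of_bound ((hmeas (n + 1)).sub (hmeas n)).aestronglyMeasurable C (hbdd n)
  have hcentred : ∀ n, ∀ᵐ ω ∂μ,
      |Z (n + 1) ω - Z n ω - (μ[Z (n + 1) - Z n | ℱ n]) ω| ≤ C + C := fun n ↦ by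
    filter_upwards [hbdd n, ae_bdd_abs_condExp_of_ae_bdd_abs (m := ℱ n) (hbdd n)] with ω h h'
    exact (abs_sub _ _).trans (add_le_add h h')
  have hterm : ∀ n, MemLp
      (fun ω ↦ γ n * (Z (n + 1) ω - Z n ω - (μ[Z (n + 1) - Z n | ℱ n]) ω)) 2 μ := fun n ↦
    (MemLp.of_bound ((hinc n).aestronglyMeasurable.sub
      integrable_condExp.aestronglyMeasurable) _ (hcentred n)).const_mul (γ n)
  refine ae_exists_tendsto_of_summable_integral_sq_sub
    (martingale_sum_mul_sub_condExp hZ (fun n ↦ (hinc n).integrable le_top) γ)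
    (fun n ↦ memLp_finsetSum _ fun k _ ↦ hterm k) ?_
  simp only [Finset.sum_range_succ, add_sub_cancel_left]
  refine .of_nonneg_of_le (fun n ↦ integral_nonneg fun ω ↦ sq_nonneg _) (fun n ↦ ?_)
    (hγ.mul_right ((C + C) ^ 2 * μ.real univ))
  calc ∫ ω, (γ n * (Z (n + 1) ω - Z n ω - (μ[Z (n + 1) - Z n | ℱ n]) ω)) ^ 2 ∂μ
      ≤ ∫ _, γ n ^ 2 * (C + C) ^ 2 ∂μ := by
        refine integral_mono_ae (hterm n).integrable_sq (integrable_const _) ?_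
        filter_upwards [hcentred n] with ω h
        rw [mul_pow]
        exact mul_le_mul_of_nonneg_left (sq_le_sq.2 (h.trans (le_abs_self _))) (sq_nonneg _)
    _ = γ n ^ 2 * ((C + C) ^ 2 * μ.real univ) := by
        rw [integral_const, smul_eq_mul]
        ring

theorem ae_exists_tendsto_sum_mul_sub_of_condExp_ae_eq {Z d : ℕ → Ω → ℝ} {C : ℝ} {γ : ℕ → ℝ}
    (hZ : StronglyAdapted ℱ Z) (hbdd : ∀ n, ∀ᵐ ω ∂μ, |Z (n + 1) ω - Z n ω| ≤ C)
    (hd : ∀ n, μ[Z (n + 1) - Z n | ℱ n] =ᵐ[μ] d n) (hγ : Summable fun n ↦ γ n ^ 2) :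
    ∀ᵐ ω ∂μ, ∃ W, Tendsto (fun n ↦ ∑ k ∈ Finset.range n,
      γ k * (Z (k + 1) ω - Z k ω - d k ω)) atTop (𝓝 W) := by
  filter_upwards [ae_exists_tendsto_sum_mul_sub_condExp hZ hbdd hγ, ae_all_iff.2 hd] with ω h hdω
  simpa only [hdω] using h

end Martingale

/-! ### Conditional laws on finite partitions -/

section Partition

variable {Ω ι : Type*} {m m0 : MeasurableSpace Ω} {μ : Measure Ω} {s : Finset ι}
  {E : ι → Set Ω}

theorem ae_exists_mem_of_sum_condExp_indicator [IsFiniteMeasure μ] (hm : m ≤ m0)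
    (hE : ∀ j ∈ s, MeasurableSet (E j)) (hdisj : (s : Set ι).PairwiseDisjoint E)
    (hsum : ∑ j ∈ s, μ[(E j).indicator fun _ ↦ (1 : ℝ) | m] =ᵐ[μ] 1) :
    ∀ᵐ ω ∂μ, ∃ j ∈ s, ω ∈ E j := by
  have hmeas : MeasurableSet (⋃ j ∈ s, E j) := s.measurableSet_biUnion hE
  have hfull : μ.real (⋃ j ∈ s, E j) = μ.real univ := by
    calc μ.real (⋃ j ∈ s, E j) = ∑ j ∈ s, μ.real (E j) := measureReal_biUnion_finset hdisj hE
      _ = ∑ j ∈ s, ∫ ω, (μ[(E j).indicator fun _ ↦ (1 : ℝ) | m]) ω ∂μ :=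
          Finset.sum_congr rfl fun j hj ↦ by
            rw [integral_condExp hm, integral_indicator_const 1 (hE j hj), smul_eq_mul, mul_one]
      _ = ∫ ω, (∑ j ∈ s, μ[(E j).indicator fun _ ↦ (1 : ℝ) | m]) ω ∂μ := by
          simp only [Finset.sum_apply]
          exact (integral_finsetSum _ fun j _ ↦ integrable_condExp).symm
      _ = μ.real univ := by
          rw [integral_congr_ae hsum]
          simp only [Pi.one_apply, integral_const, smul_eq_mul, mul_one]
  have hcompl : μ.real (⋃ j ∈ s, E j)ᶜ = 0 := by
    rw [measureReal_compl hmeas, hfull, sub_self]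
  filter_upwards [compl_mem_ae_iff.2 ((measureReal_eq_zero_iff).1 hcompl)] with ω hω
  simpa only [compl_compl, mem_iUnion, exists_prop] using hω

theorem condExp_ae_eq_sum_of_forall_mem [IsFiniteMeasure μ]
    (hE : ∀ j ∈ s, MeasurableSet (E j)) (hdisj : (s : Set ι).PairwiseDisjoint E)
    (hcover : ∀ᵐ ω ∂μ, ∃ j ∈ s, ω ∈ E j) {Z : Ω → ℝ} {f : ι → ℝ}
    (hZ : ∀ j ∈ s, ∀ ω ∈ E j, Z ω = f j) :
    μ[Z | m] =ᵐ[μ] ∑ j ∈ s, f j • μ[(E j).indicator fun _ ↦ (1 : ℝ) | m] := by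
  have hZsum : Z =ᵐ[μ] ∑ j ∈ s, f j • (E j).indicator fun _ ↦ (1 : ℝ) := by
    filter_upwards [hcover] with ω ⟨j, hj, hω⟩
    rw [Finset.sum_apply, Finset.sum_eq_single_of_mem j hj fun i hi hij ↦ ?_]
    · rw [Pi.smul_apply, indicator_of_mem hω, smul_eq_mul, mul_one, hZ j hj ω hω]
    · rw [Pi.smul_apply, indicator_of_notMem (disjoint_right.1 (hdisj hi hj hij) hω), smul_zero]
  refine (condExp_congr_ae hZsum).trans ((condExp_finsetSum (fun j hj ↦
    ((integrable_const 1).indicator (hE j hj)).smul (f j)) m).trans ?_)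
  exact eventuallyEq_sum fun j _ ↦ condExp_smul (f j) _ m

end Partition

/-! ### Bernstein polynomials and the drift -/

theorem eval_bernsteinPolynomial {R : Type*} [CommRing R] (m k : ℕ) (z : R) :
    (bernsteinPolynomial R m k).eval z = m.choose k * z ^ k * (1 - z) ^ (m - k) := by
  simp only [bernsteinPolynomial, Polynomial.eval_mul, Polynomial.eval_natCast,
    Polynomial.eval_pow, Polynomial.eval_X, Polynomial.eval_sub, Polynomial.eval_one]

theorem sum_eval_bernsteinPolynomial {R : Type*} [CommRing R] (m : ℕ) (z : R) :
    ∑ k ∈ Finset.range (m + 1), (bernsteinPolynomial R m k).eval z = 1 := by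
  rw [← Polynomial.eval_finsetSum, bernsteinPolynomial.sum, Polynomial.eval_one]

theorem sum_eval_bernsteinPolynomial_mul_natCast {R : Type*} [CommRing R] (m : ℕ) (z : R) :
    ∑ k ∈ Finset.range (m + 1), (bernsteinPolynomial R m k).eval z * k = m * z := by
  have h := congrArg (Polynomial.eval z) (bernsteinPolynomial.sum_smul R m)
  simpa only [Polynomial.eval_finsetSum, nsmul_eq_mul, Polynomial.eval_mul,
    Polynomial.eval_natCast, Polynomial.eval_X, mul_comm] using h

-- The substitution `t = z / (1 - z)` turns the Bernstein form into `(1 - z) ^ m` times the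
-- ordinary polynomial with coefficients `m.choose k * c k`.
theorem finite_setOf_sum_eval_bernsteinPolynomial_mul_eq_zero {R : Type*} [Field R] [CharZero R]
    {m : ℕ} {c : ℕ → R} (hc : ∃ k ≤ m, c k ≠ 0) :
    {z : R | ∑ k ∈ Finset.range (m + 1),
      (bernsteinPolynomial R m k).eval z * c k = 0}.Finite := by
  set Q : Polynomial R := ∑ k ∈ Finset.range (m + 1),
    Polynomial.C (m.choose k * c k) * Polynomial.X ^ k with hQdef
  have hQ : Q ≠ 0 := by
    obtain ⟨k, hk, hck⟩ := hc
    have hcoeff : Q.coeff k = m.choose k * c k := by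
      simp only [hQdef, Polynomial.finsetSum_coeff, Polynomial.coeff_C_mul_X_pow,
        Finset.sum_ite_eq, Finset.mem_range, Order.lt_add_one_iff, hk, if_true]
    refine fun h0 ↦ mul_ne_zero (Nat.cast_ne_zero.2 (Nat.choose_pos hk).ne') hck ?_
    rw [← hcoeff, h0, Polynomial.coeff_zero]
  have homogenize : ∀ z ≠ 1, (1 - z) ^ m * Q.eval (z / (1 - z))
      = ∑ k ∈ Finset.range (m + 1), (bernsteinPolynomial R m k).eval z * c k := by
    intro z hz
    have h1z : 1 - z ≠ 0 := sub_ne_zero.2 hz.symm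
    simp only [hQdef, Polynomial.eval_finsetSum, Polynomial.eval_mul, Polynomial.eval_C,
      Polynomial.eval_pow, Polynomial.eval_X, Finset.mul_sum, eval_bernsteinPolynomial]
    refine Finset.sum_congr rfl fun k hk ↦ ?_
    rw [← pow_sub_mul_pow (1 - z) (Finset.mem_range_succ_iff.1 hk), div_pow]
    field_simp [h1z]
  refine (((Polynomial.finite_setOfPred_isRoot hQ).image fun t ↦ t / (1 + t)).insert 1).subset
    fun z hz ↦ ?_
  rcases eq_or_ne z 1 with rfl | hz1
  · exact mem_insert _ _
  have h1z : 1 - z ≠ 0 := sub_ne_zero.2 hz1.symm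
  refine mem_insert_of_mem _ ⟨z / (1 - z), ?_, by field_simp [h1z]; ring⟩
  exact (mul_eq_zero.1 ((homogenize z hz1).trans hz)).resolve_left (pow_ne_zero _ h1z)

theorem polyP_eq_sum_eval_bernsteinPolynomial (m : ℕ) (p : ℕ → ℝ) (z : ℝ) :
    polyP m p z = 1 / 2 * ∑ k ∈ Finset.range (m + 1),
      (bernsteinPolynomial ℝ m k).eval z * (p k - k / m) := by
  simp only [polyP, eval_bernsteinPolynomial]

theorem continuous_polyP (m : ℕ) (p : ℕ → ℝ) : Continuous (polyP m p) := by
  unfold polyP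
  fun_prop

theorem finite_zeroSetP {m : ℕ} {p : ℕ → ℝ} (h : ∃ k ≤ m, p k ≠ (k : ℝ) / m) :
    (zeroSetP m p).Finite := by
  obtain ⟨k, hk, hpk⟩ := h
  refine (finite_setOf_sum_eval_bernsteinPolynomial_mul_eq_zero (c := fun k ↦ p k - k / m)
    ⟨k, hk, sub_ne_zero.2 hpk⟩).subset fun z hz ↦ ?_
  have hzero := hz.2
  rw [polyP_eq_sum_eval_bernsteinPolynomial] at hzero
  exact (mul_eq_zero.1 hzero).resolve_left one_half_pos.ne'

theorem sum_eval_bernsteinPolynomial_mul_eq_add_two_mul_polyP {m : ℕ} (hm : m ≠ 0) (p : ℕ → ℝ)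
    (z : ℝ) :
    ∑ k ∈ Finset.range (m + 1), (bernsteinPolynomial ℝ m k).eval z * p k
      = z + 2 * polyP m p z := by
  have hmean : ∑ k ∈ Finset.range (m + 1), (bernsteinPolynomial ℝ m k).eval z * (k / m) = z := by
    simp only [← mul_div_assoc, ← Finset.sum_div, sum_eval_bernsteinPolynomial_mul_natCast]
    exact mul_div_cancel_left₀ _ (Nat.cast_ne_zero.2 hm)
  rw [polyP_eq_sum_eval_bernsteinPolynomial]
  simp only [mul_sub, Finset.sum_sub_distrib, hmean]
  ring

namespace PAProcess

variable {Ω : Type} [MeasurableSpace Ω] (P : PAProcess Ω)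

/-! ### The law of one step -/

instance : IsProbabilityMeasure P.μ := P.isProb

theorem cast_S (n : ℕ) : (P.S n : ℝ) = P.X0 + P.Y0 + 2 * P.m * n := by
  rw [S]
  push_cast
  rfl

theorem cast_S_succ (n : ℕ) : (P.S (n + 1) : ℝ) = P.S n + 2 * P.m := by
  simp only [cast_S, Nat.cast_add_one]
  ring

variable {P} in
theorem S_pos (hS : 0 < P.X0 + P.Y0) (n : ℕ) : 0 < (P.S n : ℝ) :=
  Nat.cast_pos.2 (Nat.add_pos_left hS _)

theorem cast_m_pos : 0 < (P.m : ℝ) := Nat.cast_pos.2 P.hm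

theorem x_mem_Icc (n : ℕ) (ω : Ω) : P.x n ω ∈ Icc (0 : ℝ) 1 :=
  ⟨div_nonneg (Nat.cast_nonneg _) (Nat.cast_nonneg _),
    div_le_one_of_le₀ (Nat.cast_le.2 (P.hXle n ω)) (Nat.cast_nonneg _)⟩

/-- The possible outcomes of a step: the colour of the new node (`true` for red) and its number
of red neighbours. -/
def outcomes : Finset (Bool × ℕ) := Finset.univ ×ˢ Finset.range (P.m + 1)

/-- The event that the step from time `n` to time `n + 1` has the given outcome. -/
def stepEvent (n : ℕ) (j : Bool × ℕ) : Set Ω :=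
  {ω | P.A (n + 1) ω = P.A n ω + j.1.toNat ∧
    P.X (n + 1) ω = P.X n ω + (j.2 + P.m * j.1.toNat)}

/-- The conditional probability of an outcome, as a function of the normalized red degree. -/
def stepProb (j : Bool × ℕ) (z : ℝ) : ℝ :=
  (bernsteinPolynomial ℝ P.m j.2).eval z * if j.1 then P.p j.2 else 1 - P.p j.2

theorem sum_outcomes (f : Bool × ℕ → ℝ) :
    ∑ j ∈ P.outcomes, f j = ∑ k ∈ Finset.range (P.m + 1), (f (true, k) + f (false, k)) := by
  rw [outcomes, Finset.sum_product, Fintype.sum_bool, Finset.sum_add_distrib]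

theorem sum_stepProb (z : ℝ) : ∑ j ∈ P.outcomes, P.stepProb j z = 1 := by
  rw [sum_outcomes, ← sum_eval_bernsteinPolynomial P.m z]
  refine Finset.sum_congr rfl fun k _ ↦ ?_
  simp only [stepProb, if_true, Bool.false_eq_true, if_false]
  ring

theorem sum_red_mul_stepProb (z : ℝ) :
    ∑ j ∈ P.outcomes, (j.1.toNat : ℝ) * P.stepProb j z = z + 2 * P.poly z := by
  rw [sum_outcomes, poly,
    ← sum_eval_bernsteinPolynomial_mul_eq_add_two_mul_polyP (Nat.one_le_iff_ne_zero.1 P.hm)]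
  refine Finset.sum_congr rfl fun k _ ↦ ?_
  simp only [stepProb, Bool.toNat_true, Bool.toNat_false, if_true, Nat.cast_one, Nat.cast_zero,
    one_mul, zero_mul, add_zero]

theorem sum_degree_mul_stepProb (z : ℝ) :
    ∑ j ∈ P.outcomes, (j.2 + P.m * j.1.toNat : ℝ) * P.stepProb j z
      = 2 * P.m * (z + P.poly z) := by
  have hneighbours : ∑ j ∈ P.outcomes, (j.2 : ℝ) * P.stepProb j z = P.m * z := by
    rw [sum_outcomes, ← sum_eval_bernsteinPolynomial_mul_natCast]
    refine Finset.sum_congr rfl fun k _ ↦ ?_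
    simp only [stepProb, if_true, Bool.false_eq_true, if_false]
    ring
  simp only [add_mul, Finset.sum_add_distrib, hneighbours, mul_assoc, ← Finset.mul_sum,
    sum_red_mul_stepProb]
  ring

theorem condExp_indicator_stepEvent (n : ℕ) {j : Bool × ℕ} (hj : j ∈ P.outcomes) :
    P.μ[(P.stepEvent n j).indicator fun _ ↦ (1 : ℝ) | P.F n]
      =ᵐ[P.μ] fun ω ↦ P.stepProb j (P.x n ω) := by
  obtain ⟨_ | _, k⟩ := j <;>
    simp only [outcomes, Finset.mem_product, Finset.mem_univ, true_and,
      Finset.mem_range_succ_iff] at hj <;>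
    simp only [stepEvent, stepProb, x, cast_S, eval_bernsteinPolynomial, Bool.toNat_false,
      Bool.toNat_true, mul_zero, mul_one, add_zero, ← add_assoc, if_true, Bool.false_eq_true,
      if_false]
  · exact P.step_blue n k hj
  · exact P.step_red n k hj

theorem measurableSet_stepEvent (n : ℕ) (j : Bool × ℕ) : MeasurableSet (P.stepEvent n j) := by
  have hA : ∀ n, Measurable (P.A n) := fun n ↦ (P.adaptedA n).mono (P.F.le n) le_rfl
  have hX : ∀ n, Measurable (P.X n) := fun n ↦ (P.adaptedX n).mono (P.F.le n) le_rfl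
  exact (measurableSet_eq_fun (hA _) ((hA _).add_const _)).inter
    (measurableSet_eq_fun (hX _) ((hX _).add_const _))

theorem pairwiseDisjoint_stepEvent (n : ℕ) (s : Set (Bool × ℕ)) :
    s.PairwiseDisjoint (P.stepEvent n) := by
  rintro ⟨r, k⟩ - ⟨r', k'⟩ - hne
  refine disjoint_left.2 fun ω h h' ↦ hne ?_
  have hr : r = r' := Function.LeftInverse.injective Bool.ofNat_toNat
    (Nat.add_left_cancel (h.1.symm.trans h'.1))
  subst hr
  have hk : k = k' := Nat.add_right_cancel (Nat.add_left_cancel (h.2.symm.trans h'.2))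
  rw [hk]

theorem ae_exists_mem_stepEvent (n : ℕ) :
    ∀ᵐ ω ∂P.μ, ∃ j ∈ P.outcomes, ω ∈ P.stepEvent n j := by
  refine ae_exists_mem_of_sum_condExp_indicator (P.F.le n)
    (fun j _ ↦ P.measurableSet_stepEvent n j) (P.pairwiseDisjoint_stepEvent n _) ?_
  refine (eventuallyEq_sum fun j hj ↦ P.condExp_indicator_stepEvent n hj).trans
    (Eventually.of_forall fun ω ↦ ?_)
  rw [Finset.sum_apply, sum_stepProb, Pi.one_apply]

theorem condExp_of_forall_mem_stepEvent (n : ℕ) {Z : Ω → ℝ} {f : Bool × ℕ → ℝ}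
    (hZ : ∀ j ∈ P.outcomes, ∀ ω ∈ P.stepEvent n j, Z ω = f j) :
    P.μ[Z | P.F n] =ᵐ[P.μ] fun ω ↦ ∑ j ∈ P.outcomes, f j * P.stepProb j (P.x n ω) := by
  refine (condExp_ae_eq_sum_of_forall_mem (fun j _ ↦ P.measurableSet_stepEvent n j)
    (P.pairwiseDisjoint_stepEvent n _) (P.ae_exists_mem_stepEvent n) hZ).trans ?_
  refine (eventuallyEq_sum fun j hj ↦
    (P.condExp_indicator_stepEvent n hj).const_smul (f j)).trans (Eventually.of_forall fun ω ↦ ?_)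
  simp only [Finset.sum_apply, Pi.smul_apply, smul_eq_mul]

/-- The red node count as a real-valued process. -/
def redCount (n : ℕ) (ω : Ω) : ℝ := P.A n ω

/-- The total degree of the red nodes as a real-valued process. -/
def redDegree (n : ℕ) (ω : Ω) : ℝ := P.X n ω

variable {P} in
theorem redCount_sub_of_mem_stepEvent {n : ℕ} {j : Bool × ℕ} {ω : Ω} (h : ω ∈ P.stepEvent n j) :
    P.redCount (n + 1) ω - P.redCount n ω = j.1.toNat := by
  rw [redCount, redCount, h.1, Nat.cast_add, add_sub_cancel_left]

variable {P} in
theorem redDegree_sub_of_mem_stepEvent {n : ℕ} {j : Bool × ℕ} {ω : Ω}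
    (h : ω ∈ P.stepEvent n j) :
    P.redDegree (n + 1) ω - P.redDegree n ω = j.2 + P.m * j.1.toNat := by
  rw [redDegree, redDegree, h.2]
  push_cast
  exact add_sub_cancel_left _ _

theorem condExp_redCount_sub (n : ℕ) :
    P.μ[P.redCount (n + 1) - P.redCount n | P.F n]
      =ᵐ[P.μ] fun ω ↦ P.x n ω + 2 * P.poly (P.x n ω) := by
  simpa only [sum_red_mul_stepProb] using
    P.condExp_of_forall_mem_stepEvent n (Z := P.redCount (n + 1) - P.redCount n)
      fun _ _ _ h ↦ redCount_sub_of_mem_stepEvent h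

theorem condExp_redDegree_sub (n : ℕ) :
    P.μ[P.redDegree (n + 1) - P.redDegree n | P.F n]
      =ᵐ[P.μ] fun ω ↦ 2 * P.m * (P.x n ω + P.poly (P.x n ω)) := by
  simpa only [sum_degree_mul_stepProb] using
    P.condExp_of_forall_mem_stepEvent n (Z := P.redDegree (n + 1) - P.redDegree n)
      fun _ _ _ h ↦ redDegree_sub_of_mem_stepEvent h

theorem abs_redCount_sub_le (n : ℕ) :
    ∀ᵐ ω ∂P.μ, |P.redCount (n + 1) ω - P.redCount n ω| ≤ 1 := by
  filter_upwards [P.ae_exists_mem_stepEvent n] with ω ⟨j, _, hω⟩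
  rw [redCount_sub_of_mem_stepEvent hω, Nat.abs_cast, Nat.cast_le_one]
  exact Bool.toNat_le _

theorem abs_redDegree_sub_le (n : ℕ) :
    ∀ᵐ ω ∂P.μ, |P.redDegree (n + 1) ω - P.redDegree n ω| ≤ P.m + P.m := by
  filter_upwards [P.ae_exists_mem_stepEvent n] with ω ⟨j, hj, hω⟩
  have hk : j.2 ≤ P.m := Finset.mem_range_succ_iff.1 (Finset.mem_product.1 hj).2
  rw [redDegree_sub_of_mem_stepEvent hω, abs_of_nonneg (by positivity)]
  gcongr
  exact mul_le_of_le_one_right (Nat.cast_nonneg _) (Nat.cast_le_one.2 (Bool.toNat_le _))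

theorem stronglyAdapted_redCount : StronglyAdapted P.F P.redCount := fun n ↦
  (measurable_from_top.comp (P.adaptedA n)).stronglyMeasurable

theorem stronglyAdapted_redDegree : StronglyAdapted P.F P.redDegree := fun n ↦
  (measurable_from_top.comp (P.adaptedX n)).stronglyMeasurable

/-! ### Almost sure convergence -/

theorem summable_sq_one_div_S : Summable fun n ↦ (1 / (P.S (n + 1) : ℝ)) ^ 2 := by
  simp only [cast_S]
  exact (summable_nat_add_iff (f := fun n : ℕ ↦ (1 / (P.X0 + P.Y0 + 2 * P.m * n : ℝ)) ^ 2) 1).2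
    (summable_sq_one_div_add_mul_natCast (mul_pos two_pos P.cast_m_pos).ne')

theorem not_summable_two_mul_m_div_S : ¬ Summable fun n ↦ 2 * P.m / (P.S (n + 1) : ℝ) := by
  have hm : (2 * P.m : ℝ) ≠ 0 := (mul_pos two_pos P.cast_m_pos).ne'
  simp only [cast_S, div_eq_mul_one_div (2 * P.m : ℝ), summable_mul_left_iff hm]
  exact (summable_nat_add_iff (f := fun n : ℕ ↦ 1 / (P.X0 + P.Y0 + 2 * P.m * n : ℝ)) 1).not.2
    (not_summable_one_div_add_mul_natCast hm)

theorem tendsto_two_mul_m_div_S :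
    Tendsto (fun n ↦ 2 * P.m / (P.S (n + 1) : ℝ)) atTop (𝓝 0) := by
  simp only [cast_S]
  have htop : Tendsto (fun n : ℕ ↦ (P.X0 + P.Y0 + 2 * P.m * n : ℝ)) atTop atTop :=
    tendsto_atTop_add_const_left _ _
      (tendsto_natCast_atTop_atTop.const_mul_atTop (mul_pos two_pos P.cast_m_pos))
  exact (htop.const_div_atTop (2 * P.m : ℝ)).comp (tendsto_add_atTop_nat 1)

theorem ae_exists_tendsto_redDegree_noise :
    ∀ᵐ ω ∂P.μ, ∃ W, Tendsto (fun n ↦ ∑ k ∈ Finset.range n,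
      1 / (P.S (k + 1) : ℝ) * (P.redDegree (k + 1) ω - P.redDegree k ω
        - 2 * P.m * (P.x k ω + P.poly (P.x k ω)))) atTop (𝓝 W) :=
  ae_exists_tendsto_sum_mul_sub_of_condExp_ae_eq P.stronglyAdapted_redDegree
    P.abs_redDegree_sub_le P.condExp_redDegree_sub P.summable_sq_one_div_S

theorem ae_exists_tendsto_redCount_noise (c : ℝ) :
    ∀ᵐ ω ∂P.μ, ∃ W, Tendsto (fun n ↦ ∑ k ∈ Finset.range n,
      (P.redCount (k + 1) ω - P.redCount k ω - (P.x k ω + 2 * P.poly (P.x k ω)))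
        / (c + (k + 1 : ℕ))) atTop (𝓝 W) := by
  have hγ : Summable fun n : ℕ ↦ (1 / (c + (n + 1 : ℕ))) ^ 2 := by
    simpa only [one_mul] using
      (summable_nat_add_iff 1).2 (summable_sq_one_div_add_mul_natCast (c := c) one_ne_zero)
  simpa only [one_div_mul_eq_div] using
    ae_exists_tendsto_sum_mul_sub_of_condExp_ae_eq P.stronglyAdapted_redCount
      P.abs_redCount_sub_le P.condExp_redCount_sub hγ

variable {P}

theorem x_succ (hS : 0 < P.X0 + P.Y0) (n : ℕ) (ω : Ω) :
    P.x (n + 1) ω = P.x n ω + 2 * P.m / P.S (n + 1) * P.poly (P.x n ω)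
      + 1 / P.S (n + 1) * (P.redDegree (n + 1) ω - P.redDegree n ω
        - 2 * P.m * (P.x n ω + P.poly (P.x n ω))) := by
  have hdeg : P.redDegree n ω = P.x n ω * P.S n := (div_mul_cancel₀ _ (S_pos hS n).ne').symm
  have hx : P.x (n + 1) ω = P.redDegree (n + 1) ω / P.S (n + 1) := rfl
  have hS' := (S_pos hS (n + 1)).ne'
  rw [hx, hdeg]
  field_simp
  rw [cast_S_succ]
  ring

theorem ae_exists_tendsto_x (hS : 0 < P.X0 + P.Y0) :
    ∀ᵐ ω ∂P.μ, ∃ L ∈ P.Zp, Tendsto (P.x · ω) atTop (𝓝 L) := by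
  filter_upwards [P.ae_exists_tendsto_redDegree_noise] with ω ⟨W, hW⟩
  obtain ⟨L, hLmem, hL0, hL⟩ := exists_root_tendsto_of_stochasticApproximation
    (continuous_polyP P.m P.p) isCompact_Icc (P.x_mem_Icc · ω) (fun n ↦ by positivity)
    P.tendsto_two_mul_m_div_S P.not_summable_two_mul_m_div_S hW (x_succ hS · ω)
  exact ⟨L, ⟨hLmem, hL0⟩, hL⟩

theorem ae_exists_tendsto_a (hS : 0 < P.X0 + P.Y0) :
    ∀ᵐ ω ∂P.μ, ∃ L, Tendsto (P.a · ω) atTop (𝓝 L) ∧ L ∈ P.Zp := by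
  filter_upwards [ae_exists_tendsto_x hS, P.ae_exists_tendsto_redCount_noise (P.A0 + P.B0)]
    with ω ⟨L, hLmem, hL⟩ ⟨W, hW⟩
  have hdrift : Tendsto (fun n ↦ P.x n ω + 2 * P.poly (P.x n ω)) atTop (𝓝 L) := by
    have hpoly : Tendsto (fun n ↦ P.poly (P.x n ω)) atTop (𝓝 0) :=
      hLmem.2 ▸ ((continuous_polyP P.m P.p).tendsto L).comp hL
    simpa only [mul_zero, add_zero] using hL.add (hpoly.const_mul 2)
  exact ⟨L, tendsto_div_add_natCast_of_tendsto_sum_range (by positivity) hdrift hW, hLmem⟩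

end PAProcess

theorem nonlinear_model_convergence_to_zero_set_general {Ω : Type} [MeasurableSpace Ω]
    (P : PAProcess Ω) (hS0 : 0 < P.X0 + P.Y0) :
    ((∃ k ≤ P.m, P.p k ≠ (k : ℝ) / P.m) → P.Zp.Finite) ∧
    ∃ L : Ω → ℝ,
      (∀ᵐ ω ∂P.μ, Tendsto (fun n ↦ P.a n ω) atTop (𝓝 (L ω))) ∧
      ∀ᵐ ω ∂P.μ, L ω ∈ P.Zp := by
  obtain ⟨L, hL⟩ := (PAProcess.ae_exists_tendsto_a hS0).choice
  exact ⟨finite_zeroSetP, L, hL.mono fun _ h ↦ h.1, hL.mono fun _ h ↦ h.2⟩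

/-- **Nonlinear models.** In a nonlinear model (`p_k ≠ k/m` for some `0 ≤ k ≤ m`) with
`X_0 > 0` and `Y_0 > 0`, the zero set `Z_P` is a finite set, the process `{a_n}` converges
almost surely, and its limit lies in `Z_P` almost surely. -/
theorem nonlinear_model_convergence_to_zero_set
    {Ω : Type} [MeasurableSpace Ω] (P : PAProcess Ω)
    (hnonlin : ∃ k ≤ P.m, P.p k ≠ (k : ℝ) / P.m)
    (hX0 : 0 < P.X0) (hY0 : 0 < P.Y0) :
    P.Zp.Finite ∧
    ∃ L : Ω → ℝ,
      (∀ᵐ ω ∂P.μ, Tendsto (fun n => P.a n ω) atTop (nhds (L ω))) ∧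
      (∀ᵐ ω ∂P.μ, L ω ∈ P.Zp) := by
  obtain ⟨hfinite, hconv⟩ :=
    nonlinear_model_convergence_to_zero_set_general P (Nat.add_pos_left hX0 _)
  exact ⟨hfinite hnonlin, hconv⟩
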